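/- Let Φ be a real-valued function on symmetric t×t real matrices that is concave, invariant under conjugation by permutation matrices, and nondecreasing with respect to the Loewner order. Let λ0 ∈ ℝ and let g be an exchangeable prior. Let d be a design such that for g-almost every τ0 one has τ0′ C_{d22} τ0 > 0 and such that τ0 ↦ Φ(C_{d,τ0,λ0}) is g-integrable. Then the symmetric design d* with weights p*_s = (1/t!) ∑_σ p_{σ⁻¹∘s} satisfies τ0′ C_{d*22} τ0 > 0 for g-almost every τ0 and ∫ Φ(C_{d,τ0,λ0}) g(dτ0) ≤ ∫ Φ(C_{d*,τ0,λ0}) g(dτ0). -/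

import Mathlib

open Matrix MeasureTheory
open scoped Classical

noncomputable section

/-- A treatment sequence: assigns a treatment in `Fin t` to each period in `Fin p`. -/
abbrev TrtSeq (p t : ℕ) := Fin p → Fin t

/-- Treatment/period incidence matrix `T_s`. -/
def Tmat {p t : ℕ} (s : TrtSeq p t) : Matrix (Fin p) (Fin t) ℝ :=
  Matrix.of fun k i => if s k = i then 1 else 0

/-- Carryover incidence matrix `F_s`: first row zero, row `k` records the treatment
in period `k-1`. -/
def Fmat {p t : ℕ} (s : TrtSeq p t) : Matrix (Fin p) (Fin t) ℝ :=
  Matrix.of fun k i =>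
    if (k : ℕ) = 0 then 0
    else if s ⟨(k : ℕ) - 1, Nat.lt_of_le_of_lt (Nat.sub_le _ _) k.isLt⟩ = i then 1 else 0

/-- The all-ones `m × m` matrix `J_m`. -/
def Jmat (m : ℕ) : Matrix (Fin m) (Fin m) ℝ := Matrix.of fun _ _ => 1

/-- `B_t = I_t - J_t / t`. -/
def Bmat (t : ℕ) : Matrix (Fin t) (Fin t) ℝ := 1 - ((t : ℝ))⁻¹ • Jmat t

/-- `B̃ = Σ⁻¹ - Σ⁻¹ J_p Σ⁻¹ / (1_p' Σ⁻¹ 1_p)`. -/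
def Btil {p : ℕ} (S : Matrix (Fin p) (Fin p) ℝ) : Matrix (Fin p) (Fin p) ℝ :=
  S⁻¹ - (((fun _ => (1 : ℝ)) : Fin p → ℝ) ⬝ᵥ (S⁻¹ *ᵥ fun _ => (1 : ℝ)))⁻¹ •
    (S⁻¹ * Jmat p * S⁻¹)

/-- `G_1(s) = T_s`, `G_2(s) = F_s`. -/
def Gmat {p t : ℕ} (i : Fin 2) (s : TrtSeq p t) : Matrix (Fin p) (Fin t) ℝ :=
  if i = 0 then Tmat s else Fmat s

/-- An approximate design: nonnegative weights summing to one. -/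
def IsDesign {p t : ℕ} (w : TrtSeq p t → ℝ) : Prop :=
  (∀ s, 0 ≤ w s) ∧ ∑ s : TrtSeq p t, w s = 1

/-- `Ĉ_{sij} = B_t G_i(s)' B̃ G_j(s) B_t`. -/
def Chat {p t : ℕ} (S : Matrix (Fin p) (Fin p) ℝ) (s : TrtSeq p t) (i j : Fin 2) :
    Matrix (Fin t) (Fin t) ℝ :=
  Bmat t * (Gmat i s)ᵀ * Btil S * Gmat j s * Bmat t

/-- `c_{sij} = tr Ĉ_{sij}`. -/
def cseq {p t : ℕ} (S : Matrix (Fin p) (Fin p) ℝ) (s : TrtSeq p t) (i j : Fin 2) : ℝ :=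
  (Chat S s i j).trace

/-- `Ĉ_{dij} = n ∑_s p_s Ĉ_{sij}`. -/
def ChatD {p t : ℕ} (n : ℕ) (S : Matrix (Fin p) (Fin p) ℝ) (w : TrtSeq p t → ℝ)
    (i j : Fin 2) : Matrix (Fin t) (Fin t) ℝ :=
  (n : ℝ) • ∑ s : TrtSeq p t, w s • Chat S s i j

/-- `C_{dij} = Ĉ_{dij} - n (∑_s p_s G_i(s) B_t)' B̃ (∑_s p_s G_j(s) B_t)`. -/
def CD {p t : ℕ} (n : ℕ) (S : Matrix (Fin p) (Fin p) ℝ) (w : TrtSeq p t → ℝ)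
    (i j : Fin 2) : Matrix (Fin t) (Fin t) ℝ :=
  ChatD n S w i j -
    (n : ℝ) • ((∑ s : TrtSeq p t, w s • (Gmat i s * Bmat t))ᵀ * Btil S *
      (∑ s : TrtSeq p t, w s • (Gmat j s * Bmat t)))

/-- `c_{dij} = tr Ĉ_{dij} = n ∑_s p_s c_{sij}`. -/
def cD {p t : ℕ} (n : ℕ) (S : Matrix (Fin p) (Fin p) ℝ) (w : TrtSeq p t → ℝ)
    (i j : Fin 2) : ℝ :=
  (ChatD n S w i j).trace

/-- Fisher information matrix `C_{d,τ0,λ0}` for the direct treatment effects under the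
proportional model. -/
def CInfo {p t : ℕ} (n : ℕ) (S : Matrix (Fin p) (Fin p) ℝ) (w : TrtSeq p t → ℝ)
    (τ0 : Fin t → ℝ) (l0 : ℝ) : Matrix (Fin t) (Fin t) ℝ :=
  CD n S w 0 0 + l0 • (CD n S w 0 1 + CD n S w 1 0) + (l0 ^ 2) • CD n S w 1 1 -
    (τ0 ⬝ᵥ (CD n S w 1 1 *ᵥ τ0))⁻¹ •
      ((CD n S w 0 1 + l0 • CD n S w 1 1) * vecMulVec τ0 τ0 *
        (CD n S w 1 0 + l0 • CD n S w 1 1))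

/-- Permutation matrix `S_σ` with `(S_σ)_{j,i} = 1` iff `i = σ j`. -/
def Smat {t : ℕ} (σ : Equiv.Perm (Fin t)) : Matrix (Fin t) (Fin t) ℝ :=
  Matrix.of fun j i => if i = σ j then 1 else 0

/-- The relabelled sequence `σ ∘ s`. -/
def permSeq {p t : ℕ} (σ : Equiv.Perm (Fin t)) (s : TrtSeq p t) : TrtSeq p t := fun k => σ (s k)

/-- The design `σ d`, with weights `(σd)_s = p_{σ⁻¹ ∘ s}`. -/
def permDesign {p t : ℕ} (σ : Equiv.Perm (Fin t)) (w : TrtSeq p t → ℝ) : TrtSeq p t → ℝ :=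
  fun s => w (permSeq σ⁻¹ s)

/-- A design is symmetric if its weights are invariant under treatment relabelling. -/
def IsSymmetricDesign {p t : ℕ} (w : TrtSeq p t → ℝ) : Prop :=
  ∀ (σ : Equiv.Perm (Fin t)) (s : TrtSeq p t), w (permSeq σ s) = w s

/-- The symmetrized design `d*` with weights `p*_s = (1/t!) ∑_σ p_{σ⁻¹ ∘ s}`. -/
def symmetrize {p t : ℕ} (w : TrtSeq p t → ℝ) : TrtSeq p t → ℝ :=
  fun s => ((Nat.factorial t : ℝ))⁻¹ * ∑ σ : Equiv.Perm (Fin t), permDesign σ w s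

/-- `q_s(x) = c_{s11} + 2 c_{s12} x + c_{s22} x²`. -/
def qSeq {p t : ℕ} (S : Matrix (Fin p) (Fin p) ℝ) (s : TrtSeq p t) (x : ℝ) : ℝ :=
  cseq S s 0 0 + 2 * cseq S s 0 1 * x + cseq S s 1 1 * x ^ 2

/-- `q(x) = max_{s ∈ S} q_s(x)`. -/
def qMax (p t : ℕ) (S : Matrix (Fin p) (Fin p) ℝ) (x : ℝ) : ℝ :=
  sSup (Set.range fun s : TrtSeq p t => qSeq S s x)

/-- `y* = inf_x q(x)`. -/
def yStar (p t : ℕ) (S : Matrix (Fin p) (Fin p) ℝ) : ℝ := ⨅ x : ℝ, qMax p t S x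

/-- `q_d(x) = ∑_s p_s q_s(x)`. -/
def qD {p t : ℕ} (S : Matrix (Fin p) (Fin p) ℝ) (w : TrtSeq p t → ℝ) (x : ℝ) : ℝ :=
  ∑ s : TrtSeq p t, w s * qSeq S s x

/-- `x_d = -c_{d12}/c_{d22}`. -/
def xD {p t : ℕ} (n : ℕ) (S : Matrix (Fin p) (Fin p) ℝ) (w : TrtSeq p t → ℝ) : ℝ :=
  -(cD n S w 0 1) / cD n S w 1 1

/-- An exchangeable prior: a probability measure on `{τ : 1'τ = 0, τ ≠ 0}` that is
invariant under all coordinate permutations of `ℝ^t`. -/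
def IsExchangeablePrior {t : ℕ} (g : Measure (Fin t → ℝ)) : Prop :=
  IsProbabilityMeasure g ∧
    g {τ : Fin t → ℝ | ¬((∑ i, τ i) = 0 ∧ τ ≠ 0)} = 0 ∧
    ∀ σ : Equiv.Perm (Fin t), Measure.map (fun τ i => τ (σ i)) g = g

/-- `m_d(τ0) = min {ℓ' C_{d,τ0,λ0} ℓ : 1'ℓ = 0, ℓ'ℓ = 1}`. -/
def mD {p t : ℕ} (n : ℕ) (S : Matrix (Fin p) (Fin p) ℝ) (w : TrtSeq p t → ℝ) (l0 : ℝ)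
    (τ0 : Fin t → ℝ) : ℝ :=
  sInf {v : ℝ | ∃ l : Fin t → ℝ, (∑ i, l i) = 0 ∧ l ⬝ᵥ l = 1 ∧
    v = l ⬝ᵥ (CInfo n S w τ0 l0 *ᵥ l)}

/-- The E-criterion value `E_{g,λ0}(d) = ∫ m_d(τ0) g(dτ0)`. -/
def Ecrit {p t : ℕ} (n : ℕ) (S : Matrix (Fin p) (Fin p) ℝ) (g : Measure (Fin t → ℝ))
    (l0 : ℝ) (w : TrtSeq p t → ℝ) : ℝ :=
  ∫ τ0, mD n S w l0 τ0 ∂g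

/-- Competing designs for E-optimality: designs with a.e. positive `τ0' C_{d22} τ0`
and `g`-integrable `m_d`. -/
def EAdmissible {p t : ℕ} (n : ℕ) (S : Matrix (Fin p) (Fin p) ℝ) (g : Measure (Fin t → ℝ))
    (l0 : ℝ) (w : TrtSeq p t → ℝ) : Prop :=
  IsDesign w ∧ (∀ᵐ τ0 ∂g, 0 < τ0 ⬝ᵥ (CD n S w 1 1 *ᵥ τ0)) ∧
    Integrable (mD n S w l0) g

/-- `d` is `E_{g,λ0}`-optimal. -/
def EOptimal {p t : ℕ} (n : ℕ) (S : Matrix (Fin p) (Fin p) ℝ) (g : Measure (Fin t → ℝ))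
    (l0 : ℝ) (w : TrtSeq p t → ℝ) : Prop :=
  ∀ w' : TrtSeq p t → ℝ, EAdmissible n S g l0 w' → Ecrit n S g l0 w' ≤ Ecrit n S g l0 w

/-- A pseudo symmetric design: treatments equireplicated in each period,
and all `C_{dij}` completely symmetric. -/
def IsPseudoSymmetric {p t : ℕ} (n : ℕ) (S : Matrix (Fin p) (Fin p) ℝ)
    (w : TrtSeq p t → ℝ) : Prop :=
  (∀ (k : Fin p) (i : Fin t),
    (∑ s ∈ Finset.univ.filter fun s : TrtSeq p t => s k = i, w s) = 1 / (t : ℝ)) ∧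
  ∀ i j : Fin 2, ∃ a b : ℝ, CD n S w i j = a • (1 : Matrix (Fin t) (Fin t) ℝ) + b • Jmat t

/-- Eigenvalues of a (Hermitian) matrix sorted increasingly with multiplicity. -/
def sortedEigs {t : ℕ} (C : Matrix (Fin t) (Fin t) ℝ) : Fin t → ℝ :=
  if h : C.IsHermitian then (fun i => h.eigenvalues (Tuple.sort h.eigenvalues i))
  else fun _ => 0

/-- `Φ_D(C) = (∏_{i=1}^{t-1} a_i)^{1/(t-1)}` (eigenvalues sorted increasingly). -/
def PhiD {t : ℕ} (C : Matrix (Fin t) (Fin t) ℝ) : ℝ :=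
  (∏ i ∈ Finset.univ.filter fun i : Fin t => (i : ℕ) ≠ 0, sortedEigs C i) ^ (((t : ℝ) - 1)⁻¹)

/-- `Φ_A(C) = (t-1)(∑_{i=1}^{t-1} a_i⁻¹)⁻¹` if `a_1 > 0`, else `0`. -/
def PhiA {t : ℕ} (C : Matrix (Fin t) (Fin t) ℝ) : ℝ :=
  if ∀ i : Fin t, (i : ℕ) ≠ 0 → 0 < sortedEigs C i then
    ((t : ℝ) - 1) *
      (∑ i ∈ Finset.univ.filter fun i : Fin t => (i : ℕ) ≠ 0, (sortedEigs C i)⁻¹)⁻¹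
  else 0

/-- `Φ_T(C) = tr(C)/(t-1)`. -/
def PhiT {t : ℕ} (C : Matrix (Fin t) (Fin t) ℝ) : ℝ := C.trace / ((t : ℝ) - 1)

/-- The criterion value `∫ Φ(C_{d,τ0,λ0}) g(dτ0)`. -/
def PhiCrit {p t : ℕ} (n : ℕ) (S : Matrix (Fin p) (Fin p) ℝ)
    (Phi : Matrix (Fin t) (Fin t) ℝ → ℝ) (g : Measure (Fin t → ℝ)) (l0 : ℝ)
    (w : TrtSeq p t → ℝ) : ℝ :=
  ∫ τ0, Phi (CInfo n S w τ0 l0) ∂g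

/-- Competing designs for a `Φ`-criterion. -/
def PhiAdmissible {p t : ℕ} (n : ℕ) (S : Matrix (Fin p) (Fin p) ℝ)
    (Phi : Matrix (Fin t) (Fin t) ℝ → ℝ) (g : Measure (Fin t → ℝ)) (l0 : ℝ)
    (w : TrtSeq p t → ℝ) : Prop :=
  IsDesign w ∧ (∀ᵐ τ0 ∂g, 0 < τ0 ⬝ᵥ (CD n S w 1 1 *ᵥ τ0)) ∧
    Integrable (fun τ0 => Phi (CInfo n S w τ0 l0)) g

/-- `d` is `Φ_{g,λ0}`-optimal. -/
def PhiOptimal {p t : ℕ} (n : ℕ) (S : Matrix (Fin p) (Fin p) ℝ)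
    (Phi : Matrix (Fin t) (Fin t) ℝ → ℝ) (g : Measure (Fin t → ℝ)) (l0 : ℝ)
    (w : TrtSeq p t → ℝ) : Prop :=
  ∀ w' : TrtSeq p t → ℝ, PhiAdmissible n S Phi g l0 w' →
    PhiCrit n S Phi g l0 w' ≤ PhiCrit n S Phi g l0 w

/-- `H_1(s) = F_s`, `H_2(s) = T_s + λ0 F_s` (for estimating `λ`). -/
def Hmat {p t : ℕ} (l0 : ℝ) (i : Fin 2) (s : TrtSeq p t) : Matrix (Fin p) (Fin t) ℝ :=
  if i = 0 then Fmat s else Tmat s + l0 • Fmat s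

/-- `Â_{sij} = B_t H_i(s)' B̃ H_j(s) B_t`. -/
def Ahat {p t : ℕ} (S : Matrix (Fin p) (Fin p) ℝ) (l0 : ℝ) (s : TrtSeq p t) (i j : Fin 2) :
    Matrix (Fin t) (Fin t) ℝ :=
  Bmat t * (Hmat l0 i s)ᵀ * Btil S * Hmat l0 j s * Bmat t

/-- `h_{sij} = tr Â_{sij}`. -/
def hseq {p t : ℕ} (S : Matrix (Fin p) (Fin p) ℝ) (l0 : ℝ) (s : TrtSeq p t) (i j : Fin 2) : ℝ :=
  (Ahat S l0 s i j).trace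

/-- `Â_{dij} = n ∑_s p_s Â_{sij}`. -/
def AhatD {p t : ℕ} (n : ℕ) (S : Matrix (Fin p) (Fin p) ℝ) (l0 : ℝ) (w : TrtSeq p t → ℝ)
    (i j : Fin 2) : Matrix (Fin t) (Fin t) ℝ :=
  (n : ℝ) • ∑ s : TrtSeq p t, w s • Ahat S l0 s i j

/-- `A_{dij} = Â_{dij} - n (∑_s p_s H_i(s) B_t)' B̃ (∑_s p_s H_j(s) B_t)`. -/
def AD {p t : ℕ} (n : ℕ) (S : Matrix (Fin p) (Fin p) ℝ) (l0 : ℝ) (w : TrtSeq p t → ℝ)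
    (i j : Fin 2) : Matrix (Fin t) (Fin t) ℝ :=
  AhatD n S l0 w i j -
    (n : ℝ) • ((∑ s : TrtSeq p t, w s • (Hmat l0 i s * Bmat t))ᵀ * Btil S *
      (∑ s : TrtSeq p t, w s • (Hmat l0 j s * Bmat t)))

/-- `G` is a generalized inverse of `A`. -/
def IsGInv {t : ℕ} (A G : Matrix (Fin t) (Fin t) ℝ) : Prop := A * G * A = A

/-- `A_d(G) = A_{d11} - A_{d12} G A_{d21}` with `A_{d21} = A_{d12}'`. -/
def ADfun {p t : ℕ} (n : ℕ) (S : Matrix (Fin p) (Fin p) ℝ) (l0 : ℝ) (w : TrtSeq p t → ℝ)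
    (G : Matrix (Fin t) (Fin t) ℝ) : Matrix (Fin t) (Fin t) ℝ :=
  AD n S l0 w 0 0 - AD n S l0 w 0 1 * G * (AD n S l0 w 0 1)ᵀ

/-- `r_s(x) = h_{s11} + 2 h_{s12} x + h_{s22} x²`. -/
def rSeq {p t : ℕ} (S : Matrix (Fin p) (Fin p) ℝ) (l0 : ℝ) (s : TrtSeq p t) (x : ℝ) : ℝ :=
  hseq S l0 s 0 0 + 2 * hseq S l0 s 0 1 * x + hseq S l0 s 1 1 * x ^ 2

/-- `r(x) = max_s r_s(x)`. -/
def rMax (p t : ℕ) (S : Matrix (Fin p) (Fin p) ℝ) (l0 : ℝ) (x : ℝ) : ℝ :=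
  sSup (Set.range fun s : TrtSeq p t => rSeq S l0 s x)

/-- `y_0 = inf_x r(x)`. -/
def yZero (p t : ℕ) (S : Matrix (Fin p) (Fin p) ℝ) (l0 : ℝ) : ℝ := ⨅ x : ℝ, rMax p t S l0 x

/-- bilinear form of `B̃` -/
def bilF {p : ℕ} (S : Matrix (Fin p) (Fin p) ℝ) (x y : Fin p → ℝ) : ℝ := x ⬝ᵥ (Btil S *ᵥ y)

lemma Jmat_eq (m : ℕ) : Jmat m = vecMulVec (fun _ => (1:ℝ)) (fun _ => (1:ℝ)) := by
  ext i j; simp [Jmat, vecMulVec_apply]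

lemma Bmat_symm (t : ℕ) : (Bmat t)ᵀ = Bmat t := by
  have : (Jmat t)ᵀ = Jmat t := by ext; simp [Jmat]
  simp [Bmat, this]

lemma Btil_symm {p : ℕ} (S : Matrix (Fin p) (Fin p) ℝ) (hS : S.PosDef) :
    (Btil S)ᵀ = Btil S := by
  have hJ : (Jmat p)ᵀ = Jmat p := by ext; simp [Jmat]
  have h1 : (S⁻¹)ᵀ = S⁻¹ := by
    have := hS.inv.isHermitian
    simpa [Matrix.IsHermitian, conjTranspose_eq_transpose_of_trivial] using this
  simp [Btil, h1, hJ, Matrix.mul_assoc]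

lemma dot_symm {m : ℕ} (A : Matrix (Fin m) (Fin m) ℝ) (x y : Fin m → ℝ) :
    x ⬝ᵥ (A *ᵥ y) = y ⬝ᵥ (Aᵀ *ᵥ x) := by
  rw [Matrix.mulVec_transpose, dotProduct_mulVec, dotProduct_comm]

lemma bilF_comm {p : ℕ} (S : Matrix (Fin p) (Fin p) ℝ) (hS : S.PosDef) (x y : Fin p → ℝ) :
    bilF S x y = bilF S y x := by
  unfold bilF; rw [dot_symm, Btil_symm S hS]

lemma bilF_nonneg {p : ℕ} (hp : 2 ≤ p) (S : Matrix (Fin p) (Fin p) ℝ) (hS : S.PosDef)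
    (x : Fin p → ℝ) : 0 ≤ bilF S x x := by
  have hA := hS.inv
  have h1 : (S⁻¹)ᵀ = S⁻¹ := by
    have := hS.inv.isHermitian
    simpa [Matrix.IsHermitian, conjTranspose_eq_transpose_of_trivial] using this
  set A := S⁻¹ with hAdef
  set e : Fin p → ℝ := fun _ => 1 with he
  have hc : 0 < e ⬝ᵥ (A *ᵥ e) := by
    have hne : e ≠ 0 := by
      intro h
      have := congrFun h ⟨0, by omega⟩
      simp [he] at this
    simpa using hA.dotProduct_mulVec_pos hne
  have hsq : 0 ≤ (x - ((x ⬝ᵥ (A *ᵥ e)) / (e ⬝ᵥ (A *ᵥ e))) • e) ⬝ᵥ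
      (A *ᵥ (x - ((x ⬝ᵥ (A *ᵥ e)) / (e ⬝ᵥ (A *ᵥ e))) • e)) := by
    simpa using hA.posSemidef.dotProduct_mulVec_nonneg
      (x - ((x ⬝ᵥ (A *ᵥ e)) / (e ⬝ᵥ (A *ᵥ e))) • e)
  have hsw : e ⬝ᵥ (A *ᵥ x) = x ⬝ᵥ (A *ᵥ e) := by rw [dot_symm, h1]
  have key : bilF S x x = x ⬝ᵥ (A *ᵥ x) - (e ⬝ᵥ (A *ᵥ e))⁻¹ * ((x ⬝ᵥ (A *ᵥ e)) * (e ⬝ᵥ (A *ᵥ x))) := by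
    unfold bilF Btil
    rw [← hAdef, ← he, Jmat_eq, ← he, sub_mulVec, dotProduct_sub, smul_mulVec, dotProduct_smul,
      ← mulVec_mulVec, ← mulVec_mulVec, vecMulVec_mulVec]
    simp [mulVec_smul, mul_comm]
  rw [key, hsw]
  simp only [mulVec_sub, dotProduct_sub, sub_dotProduct, mulVec_smul, smul_dotProduct,
    dotProduct_smul, smul_eq_mul, hsw] at hsq
  generalize e ⬝ᵥ (A *ᵥ e) = c at *
  generalize x ⬝ᵥ (A *ᵥ e) = b at *
  have : b / c * c = b := by field_simp
  have h3 : b / c = c⁻¹ * b := by ring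
  rw [this] at hsq
  rw [h3] at hsq
  nlinarith

lemma bilF_convex {p : ℕ} (hp : 2 ≤ p) (S : Matrix (Fin p) (Fin p) ℝ) (hS : S.PosDef) :
    ConvexOn ℝ Set.univ (fun x => bilF S x x) := by
  refine ⟨convex_univ, ?_⟩
  intro x _ y _ a b ha hb hab
  have h := bilF_nonneg hp S hS (x - y)
  have hc := bilF_comm S hS x y
  obtain rfl : b = 1 - a := by linarith
  simp only [bilF, mulVec_add, mulVec_sub, mulVec_smul, dotProduct_add, dotProduct_sub,
    add_dotProduct, sub_dotProduct, smul_dotProduct, dotProduct_smul, smul_eq_mul] at *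
  rw [← hc] at h ⊢
  nlinarith [mul_nonneg (mul_nonneg ha hb) h]

lemma CD_dot {p t : ℕ} (n : ℕ) (S : Matrix (Fin p) (Fin p) ℝ) (w : TrtSeq p t → ℝ) (i j : Fin 2)
    (a b : Fin t → ℝ) :
    a ⬝ᵥ (CD n S w i j *ᵥ b) = n * (∑ s, w s * bilF S (Gmat i s *ᵥ (Bmat t *ᵥ a))
      (Gmat j s *ᵥ (Bmat t *ᵥ b)) - bilF S (∑ s, w s • (Gmat i s *ᵥ (Bmat t *ᵥ a)))
      (∑ s, w s • (Gmat j s *ᵥ (Bmat t *ᵥ b)))) := by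
  have hx : ∀ (X : Matrix (Fin p) (Fin t) ℝ) (v : Fin p → ℝ), a ⬝ᵥ (Xᵀ *ᵥ v) = (X *ᵥ a) ⬝ᵥ v := by
    intro X v
    rw [mulVec_transpose, dotProduct_comm, ← dotProduct_mulVec, dotProduct_comm]
  have hy : ∀ (v : Fin t → ℝ), a ⬝ᵥ (Bmat t *ᵥ v) = (Bmat t *ᵥ a) ⬝ᵥ v := by
    intro v
    rw [dot_symm, Bmat_symm, dotProduct_comm]
  have hz : ∀ (X : Matrix (Fin p) (Fin t) ℝ) (c : Fin t → ℝ) (v : Fin p → ℝ), c ⬝ᵥ (Xᵀ *ᵥ v) = (X *ᵥ c) ⬝ᵥ v := by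
    intro X c v
    rw [mulVec_transpose, dotProduct_comm, ← dotProduct_mulVec, dotProduct_comm]
  unfold CD ChatD Chat bilF
  rw [sub_mulVec, dotProduct_sub, smul_mulVec, smul_mulVec, dotProduct_smul, dotProduct_smul,
    sum_mulVec, dotProduct_sum, ← mulVec_mulVec, ← mulVec_mulVec, hx, sum_mulVec, sum_mulVec]
  simp only [smul_mulVec, dotProduct_smul, ← mulVec_mulVec, hy, hz, smul_eq_mul]
  ring

/-- joint quadratic form -/
def QF {p t : ℕ} (n : ℕ) (S : Matrix (Fin p) (Fin p) ℝ) (w : TrtSeq p t → ℝ)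
    (u v : Fin t → ℝ) : ℝ :=
  u ⬝ᵥ (CD n S w 0 0 *ᵥ u) + u ⬝ᵥ (CD n S w 0 1 *ᵥ v) + v ⬝ᵥ (CD n S w 1 0 *ᵥ u)
    + v ⬝ᵥ (CD n S w 1 1 *ᵥ v)

lemma QF_eq {p t : ℕ} (n : ℕ) (S : Matrix (Fin p) (Fin p) ℝ)
    (u v : Fin t → ℝ) : ∃ z : TrtSeq p t → Fin p → ℝ, ∀ w : TrtSeq p t → ℝ,
    QF n S w u v = n * (∑ s, w s * bilF S (z s) (z s) -
      bilF S (∑ s, w s • z s) (∑ s, w s • z s)) := by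
  refine ⟨fun s => Gmat 0 s *ᵥ (Bmat t *ᵥ u) + Gmat 1 s *ᵥ (Bmat t *ᵥ v), fun w => ?_⟩
  unfold QF
  simp only [CD_dot, smul_add, Finset.sum_add_distrib]
  have e : ∀ a b c d : Fin p → ℝ, bilF S (a + b) (c + d)
      = bilF S a c + bilF S a d + bilF S b c + bilF S b d := by
    intro a b c d
    simp only [bilF, mulVec_add, dotProduct_add, add_dotProduct]; ring
  simp only [e, mul_add, Finset.sum_add_distrib]
  ring

lemma QF_concave {p t : ℕ} (hp : 2 ≤ p) (n : ℕ) (S : Matrix (Fin p) (Fin p) ℝ) (hS : S.PosDef)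
    (w : TrtSeq p t → ℝ) (u v : Fin t → ℝ) :
    ∑ σ : Equiv.Perm (Fin t), (Nat.factorial t : ℝ)⁻¹ * QF n S (permDesign σ w) u v ≤
      QF n S (symmetrize w) u v := by
  obtain ⟨z, hz⟩ := QF_eq n S u v
  simp only [hz]
  have hsum : ∑ σ : Equiv.Perm (Fin t), (Nat.factorial t : ℝ)⁻¹ = 1 := by
    have : (Nat.factorial t : ℝ) ≠ 0 := by positivity
    simp [Fintype.card_perm, this]
  have hconv := (bilF_convex hp S hS).map_sum_le (t := Finset.univ)
    (w := fun _ : Equiv.Perm (Fin t) => (Nat.factorial t : ℝ)⁻¹)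
    (p := fun σ => ∑ s, permDesign σ w s • z s)
    (by intros; positivity) hsum (by simp)
  have h1 : ∑ s, symmetrize w s • z s =
      ∑ σ : Equiv.Perm (Fin t), (Nat.factorial t : ℝ)⁻¹ • ∑ s, permDesign σ w s • z s := by
    simp only [symmetrize, Finset.smul_sum, Finset.sum_smul, Finset.mul_sum]
    rw [Finset.sum_comm]
    simp [smul_smul]
  have h2 : ∑ s, symmetrize w s * bilF S (z s) (z s) =
      ∑ σ : Equiv.Perm (Fin t), (Nat.factorial t : ℝ)⁻¹ *
        ∑ s, permDesign σ w s * bilF S (z s) (z s) := by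
    simp only [symmetrize, Finset.sum_mul, Finset.mul_sum]
    rw [Finset.sum_comm]
    simp [mul_assoc]
  rw [h1, h2]
  simp only [smul_eq_mul] at hconv
  have h3 : ∀ σ : Equiv.Perm (Fin t), (Nat.factorial t : ℝ)⁻¹ *
      (n * (∑ s, permDesign σ w s * bilF S (z s) (z s) -
      bilF S (∑ s, permDesign σ w s • z s) (∑ s, permDesign σ w s • z s))) =
      n * ((Nat.factorial t : ℝ)⁻¹ * ∑ s, permDesign σ w s * bilF S (z s) (z s) -
       (Nat.factorial t : ℝ)⁻¹ *
      bilF S (∑ s, permDesign σ w s • z s) (∑ s, permDesign σ w s • z s)) := by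
    intro σ; ring
  simp only [h3]
  rw [← Finset.mul_sum, Finset.sum_sub_distrib]
  apply mul_le_mul_of_nonneg_left _ (Nat.cast_nonneg n)
  linarith

lemma CD_transpose {p t : ℕ} (n : ℕ) (S : Matrix (Fin p) (Fin p) ℝ) (hS : S.PosDef)
    (w : TrtSeq p t → ℝ) (i j : Fin 2) : (CD n S w i j)ᵀ = CD n S w j i := by
  simp only [CD, ChatD, Chat, transpose_sub, transpose_smul, transpose_sum, transpose_mul,
    transpose_transpose, Btil_symm S hS, Bmat_symm, Matrix.mul_assoc]

lemma CInfo_isSymm {p t : ℕ} (n : ℕ) (S : Matrix (Fin p) (Fin p) ℝ) (hS : S.PosDef)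
    (w : TrtSeq p t → ℝ) (τ : Fin t → ℝ) (l0 : ℝ) : (CInfo n S w τ l0).IsSymm := by
  unfold Matrix.IsSymm CInfo
  simp only [transpose_sub, transpose_add, transpose_smul, transpose_mul, CD_transpose n S hS,
    transpose_vecMulVec, Matrix.mul_assoc, add_comm (CD n S w 1 0) (CD n S w 0 1)]

lemma QF_CInfo {p t : ℕ} (n : ℕ) (S : Matrix (Fin p) (Fin p) ℝ) (hS : S.PosDef)
    (w : TrtSeq p t → ℝ) (τ : Fin t → ℝ) (l0 : ℝ) (hD : τ ⬝ᵥ (CD n S w 1 1 *ᵥ τ) ≠ 0)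
    (l : Fin t → ℝ) : ∃ y : ℝ, ∀ x : ℝ,
    QF n S w l (l0 • l + x • τ) = l ⬝ᵥ (CInfo n S w τ l0 *ᵥ l)
      + (τ ⬝ᵥ (CD n S w 1 1 *ᵥ τ)) * (x - y) ^ 2 := by
  refine ⟨-((l ⬝ᵥ (CD n S w 0 1 *ᵥ τ) + l0 * (l ⬝ᵥ (CD n S w 1 1 *ᵥ τ))) /
    (τ ⬝ᵥ (CD n S w 1 1 *ᵥ τ))), fun x => ?_⟩
  have h1 : τ ⬝ᵥ (CD n S w 1 0 *ᵥ l) = l ⬝ᵥ (CD n S w 0 1 *ᵥ τ) := by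
    rw [dot_symm, CD_transpose n S hS]
  have h2 : τ ⬝ᵥ (CD n S w 1 1 *ᵥ l) = l ⬝ᵥ (CD n S w 1 1 *ᵥ τ) := by
    rw [dot_symm, CD_transpose n S hS]
  have h3 : l ⬝ᵥ (CD n S w 1 0 *ᵥ l) = l ⬝ᵥ (CD n S w 0 1 *ᵥ l) := by
    rw [dot_symm, CD_transpose n S hS]
  unfold QF CInfo
  simp only [sub_mulVec, add_mulVec, smul_mulVec, ← mulVec_mulVec, vecMulVec_mulVec,
    mulVec_add, mulVec_smul, dotProduct_add, dotProduct_sub, dotProduct_smul, add_dotProduct,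
    smul_dotProduct, smul_eq_mul, op_smul_eq_smul, h1, h2, h3]
  field_simp
  ring

lemma Smat_mulVec {t : ℕ} (σ : Equiv.Perm (Fin t)) (τ : Fin t → ℝ) :
    Smat σ *ᵥ τ = fun i => τ (σ i) := by
  ext i; simp [Smat, mulVec, dotProduct]

lemma Smat_Bmat {t : ℕ} (σ : Equiv.Perm (Fin t)) : Smat σ * Bmat t = Bmat t * Smat σ := by
  have : Smat σ * Jmat t = Jmat t * Smat σ := by
    ext i j
    simp only [Smat, Jmat, mul_apply, of_apply, mul_one, one_mul]
    have : ∀ x, (j = σ x) ↔ (σ.symm j = x) := fun x => by rw [Equiv.symm_apply_eq]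
    simp only [this]
    simp
  simp [Bmat, mul_sub, sub_mul, this]

lemma Gmat_perm {p t : ℕ} (σ : Equiv.Perm (Fin t)) (i : Fin 2) (s : TrtSeq p t) :
    Gmat i (permSeq σ s) = Gmat i s * Smat σ := by
  unfold Gmat
  split_ifs
  · ext k m
    simp only [Tmat, Smat, permSeq, mul_apply, of_apply, ite_mul, one_mul, zero_mul,
      Finset.sum_ite_eq, Finset.mem_univ, if_true]
    simp only [eq_comm]
  · ext k m
    by_cases hk : (k : ℕ) = 0
    · simp [Fmat, Smat, permSeq, mul_apply, hk]
    · simp only [Fmat, Smat, permSeq, mul_apply, of_apply, ite_mul, one_mul, zero_mul, hk, if_false,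
        Finset.sum_ite_eq, Finset.mem_univ, if_true]
      simp only [eq_comm]

/-- relabelling as an equivalence of sequences -/
def permSeqEquiv (p : ℕ) {t : ℕ} (σ : Equiv.Perm (Fin t)) : TrtSeq p t ≃ TrtSeq p t where
  toFun := permSeq σ
  invFun := permSeq σ⁻¹
  left_inv s := by ext k; simp [permSeq]
  right_inv s := by ext k; simp [permSeq]

lemma sum_perm {p t : ℕ} {M : Type*} [AddCommMonoid M] [Module ℝ M] (σ : Equiv.Perm (Fin t))
    (w : TrtSeq p t → ℝ) (f : TrtSeq p t → M) :
    ∑ s, permDesign σ w s • f s = ∑ s, w s • f (permSeq σ s) := by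
  rw [← Equiv.sum_comp (permSeqEquiv p σ)]
  refine Finset.sum_congr rfl fun s _ => ?_
  have : permSeq σ⁻¹ (permSeq σ s) = s := (permSeqEquiv p σ).left_inv s
  simp [permDesign, permSeqEquiv, this]

lemma CD_perm {p t : ℕ} (n : ℕ) (S : Matrix (Fin p) (Fin p) ℝ) (σ : Equiv.Perm (Fin t))
    (w : TrtSeq p t → ℝ) (i j : Fin 2) :
    CD n S (permDesign σ w) i j = (Smat σ)ᵀ * CD n S w i j * Smat σ := by
  have hB : Bmat t * (Smat σ)ᵀ = (Smat σ)ᵀ * Bmat t := by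
    have := congrArg Matrix.transpose (Smat_Bmat σ)
    simpa [transpose_mul, Bmat_symm] using this
  have h1 : ∀ s : TrtSeq p t, Chat S (permSeq σ s) i j = (Smat σ)ᵀ * Chat S s i j * Smat σ := by
    intro s
    simp only [Chat, Gmat_perm, transpose_mul]
    calc _ = (Bmat t * (Smat σ)ᵀ) * (Gmat i s)ᵀ * Btil S * Gmat j s * (Smat σ * Bmat t) := by
          simp only [Matrix.mul_assoc]
      _ = _ := by rw [hB, Smat_Bmat]; simp only [Matrix.mul_assoc]
  have h2 : ∀ (i : Fin 2) (s : TrtSeq p t), Gmat i (permSeq σ s) * Bmat t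
      = (Gmat i s * Bmat t) * Smat σ := by
    intro i s
    rw [Gmat_perm, Matrix.mul_assoc, Smat_Bmat, Matrix.mul_assoc]
  unfold CD ChatD
  have h3 : ∀ i : Fin 2, ∑ s, w s • (Gmat i s * Bmat t * Smat σ) =
      (∑ s, w s • (Gmat i s * Bmat t)) * Smat σ := by
    intro i; simp only [Matrix.sum_mul, Matrix.smul_mul]
  have h4 : ∑ s, w s • ((Smat σ)ᵀ * Chat S s i j * Smat σ) =
      (Smat σ)ᵀ * (∑ s, w s • Chat S s i j) * Smat σ := by
    simp only [Matrix.sum_mul, Matrix.mul_sum, Matrix.smul_mul, Matrix.mul_smul]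
  simp only [sum_perm, h1, h2]
  rw [h3, h3, h4]
  simp only [transpose_mul, Matrix.mul_sub, Matrix.sub_mul, Matrix.mul_assoc, Matrix.smul_mul,
    Matrix.mul_smul]

lemma CInfo_perm {p t : ℕ} (n : ℕ) (S : Matrix (Fin p) (Fin p) ℝ) (σ : Equiv.Perm (Fin t))
    (w : TrtSeq p t → ℝ) (τ : Fin t → ℝ) (l0 : ℝ) :
    CInfo n S (permDesign σ w) τ l0 =
      (Smat σ)ᵀ * CInfo n S w (fun i => τ (σ i)) l0 * Smat σ := by
  have hv : vecMulVec (Smat σ *ᵥ τ) (Smat σ *ᵥ τ) = Smat σ * vecMulVec τ τ * (Smat σ)ᵀ := by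
    rw [mul_vecMulVec, vecMulVec_mul, vecMul_transpose]
  have hd : τ ⬝ᵥ (((Smat σ)ᵀ * CD n S w 1 1 * Smat σ) *ᵥ τ) =
      (Smat σ *ᵥ τ) ⬝ᵥ (CD n S w 1 1 *ᵥ (Smat σ *ᵥ τ)) := by
    rw [← mulVec_mulVec, ← mulVec_mulVec, mulVec_transpose, dotProduct_comm, ← dotProduct_mulVec,
      dotProduct_comm]
  rw [← Smat_mulVec]
  unfold CInfo
  simp only [CD_perm, hv, hd]
  simp only [Matrix.mul_sub, Matrix.sub_mul, Matrix.mul_add, Matrix.add_mul, Matrix.mul_assoc,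
    Matrix.smul_mul, Matrix.mul_smul, smul_add]

lemma dot_perm {p t : ℕ} (n : ℕ) (S : Matrix (Fin p) (Fin p) ℝ) (σ : Equiv.Perm (Fin t))
    (w : TrtSeq p t → ℝ) (τ : Fin t → ℝ) :
    τ ⬝ᵥ (CD n S (permDesign σ w) 1 1 *ᵥ τ) =
      (fun i => τ (σ i)) ⬝ᵥ (CD n S w 1 1 *ᵥ (fun i => τ (σ i))) := by
  rw [CD_perm, ← Smat_mulVec, ← mulVec_mulVec, ← mulVec_mulVec, mulVec_transpose, dotProduct_comm,
    ← dotProduct_mulVec, dotProduct_comm]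

lemma sum_fact_inv (t : ℕ) : ∑ σ : Equiv.Perm (Fin t), (Nat.factorial t : ℝ)⁻¹ = 1 := by
  have : (Nat.factorial t : ℝ) ≠ 0 := by positivity
  simp [Fintype.card_perm, this]

lemma dot_sym_pos {p t : ℕ} (hp : 2 ≤ p) (n : ℕ) (S : Matrix (Fin p) (Fin p) ℝ) (hS : S.PosDef)
    (w : TrtSeq p t → ℝ) (τ : Fin t → ℝ)
    (h : ∀ σ : Equiv.Perm (Fin t), 0 < τ ⬝ᵥ (CD n S (permDesign σ w) 1 1 *ᵥ τ)) :
    0 < τ ⬝ᵥ (CD n S (symmetrize w) 1 1 *ᵥ τ) := by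
  have hq := QF_concave hp n S hS w 0 τ
  have e : ∀ w : TrtSeq p t → ℝ, QF n S w 0 τ = τ ⬝ᵥ (CD n S w 1 1 *ᵥ τ) := by
    intro w; simp [QF]
  simp only [e] at hq
  refine lt_of_lt_of_le (Finset.sum_pos (fun σ _ => mul_pos (by positivity) (h σ)) ⟨1, by simp⟩) hq

lemma CInfo_sym_ge {p t : ℕ} (hp : 2 ≤ p) (n : ℕ) (S : Matrix (Fin p) (Fin p) ℝ) (hS : S.PosDef)
    (w : TrtSeq p t → ℝ) (τ : Fin t → ℝ) (l0 : ℝ)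
    (h : ∀ σ : Equiv.Perm (Fin t), 0 < τ ⬝ᵥ (CD n S (permDesign σ w) 1 1 *ᵥ τ)) :
    (CInfo n S (symmetrize w) τ l0 - ∑ σ : Equiv.Perm (Fin t), (Nat.factorial t : ℝ)⁻¹ •
      CInfo n S (permDesign σ w) τ l0).PosSemidef := by
  refine Matrix.PosSemidef.of_dotProduct_mulVec_nonneg ?_ ?_
  · rw [Matrix.IsHermitian, conjTranspose_eq_transpose_of_trivial]
    simp only [transpose_sub, transpose_sum, transpose_smul]
    simp only [(CInfo_isSymm n S hS _ τ l0).eq]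
  · intro l
    have hpos := dot_sym_pos hp n S hS w τ h
    obtain ⟨y, hy⟩ := QF_CInfo n S hS (symmetrize w) τ l0 hpos.ne' l
    have hq := QF_concave hp n S hS w l (l0 • l + y • τ)
    rw [hy] at hq
    have h2 : ∀ σ : Equiv.Perm (Fin t), l ⬝ᵥ (CInfo n S (permDesign σ w) τ l0 *ᵥ l) ≤
        QF n S (permDesign σ w) l (l0 • l + y • τ) := by
      intro σ
      obtain ⟨x, hx⟩ := QF_CInfo n S hS (permDesign σ w) τ l0 (h σ).ne' l
      rw [hx]
      have := mul_nonneg (h σ).le (sq_nonneg (y - x))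
      linarith
    have h3 : ∑ σ : Equiv.Perm (Fin t), (Nat.factorial t : ℝ)⁻¹ *
        (l ⬝ᵥ (CInfo n S (permDesign σ w) τ l0 *ᵥ l)) ≤
        ∑ σ : Equiv.Perm (Fin t), (Nat.factorial t : ℝ)⁻¹ *
          QF n S (permDesign σ w) l (l0 • l + y • τ) :=
      Finset.sum_le_sum fun σ _ => mul_le_mul_of_nonneg_left (h2 σ) (by positivity)
    simp only [star_trivial, sub_mulVec, dotProduct_sub, sum_mulVec, dotProduct_sum, smul_mulVec,
      dotProduct_smul, smul_eq_mul]
    simp only [sub_self] at hq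
    linarith

/-- constant upper bound for the information matrix -/
def Kmat {p t : ℕ} (n : ℕ) (S : Matrix (Fin p) (Fin p) ℝ) (w : TrtSeq p t → ℝ)
    (l0 : ℝ) : Matrix (Fin t) (Fin t) ℝ :=
  CD n S w 0 0 + l0 • (CD n S w 0 1 + CD n S w 1 0) + (l0 ^ 2) • CD n S w 1 1

lemma Kmat_isSymm {p t : ℕ} (n : ℕ) (S : Matrix (Fin p) (Fin p) ℝ) (hS : S.PosDef)
    (w : TrtSeq p t → ℝ) (l0 : ℝ) : (Kmat n S w l0).IsSymm := by
  unfold Matrix.IsSymm Kmat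
  simp only [transpose_add, transpose_smul, CD_transpose n S hS,
    add_comm (CD n S w 1 0) (CD n S w 0 1)]

lemma CInfo_le_Kmat {p t : ℕ} (n : ℕ) (S : Matrix (Fin p) (Fin p) ℝ) (hS : S.PosDef)
    (w : TrtSeq p t → ℝ) (τ : Fin t → ℝ) (l0 : ℝ) (h : 0 < τ ⬝ᵥ (CD n S w 1 1 *ᵥ τ)) :
    (Kmat n S w l0 - CInfo n S w τ l0).PosSemidef := by
  have e : Kmat n S w l0 - CInfo n S w τ l0 = (τ ⬝ᵥ (CD n S w 1 1 *ᵥ τ))⁻¹ •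
      ((CD n S w 0 1 + l0 • CD n S w 1 1) * vecMulVec τ τ *
        (CD n S w 1 0 + l0 • CD n S w 1 1)) := by
    unfold Kmat CInfo; abel
  rw [e]
  refine Matrix.PosSemidef.smul ?_ (inv_nonneg.2 h.le)
  have h1 : (vecMulVec τ τ).PosSemidef := by
    simpa using Matrix.posSemidef_vecMulVec_self_star τ
  have := h1.mul_mul_conjTranspose_same (CD n S w 0 1 + l0 • CD n S w 1 1)
  simpa [conjTranspose_eq_transpose_of_trivial, CD_transpose n S hS] using this

/-- symmetrised criterion -/
def PhiS {t : ℕ} (Phi : Matrix (Fin t) (Fin t) ℝ → ℝ) (M : Fin t → Fin t → ℝ) : ℝ :=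
  Phi ((1/2 : ℝ) • (Matrix.of M + (Matrix.of M)ᵀ))

lemma PhiS_eq {t : ℕ} (Phi : Matrix (Fin t) (Fin t) ℝ → ℝ) (M : Matrix (Fin t) (Fin t) ℝ)
    (hM : M.IsSymm) : PhiS Phi M = Phi M := by
  unfold PhiS
  congr 1
  have : (Matrix.of M)ᵀ = M := hM
  have h2 : Matrix.of M = M := rfl
  rw [this, h2]
  ext i j; simp; ring

lemma PhiS_concave {t : ℕ} (Phi : Matrix (Fin t) (Fin t) ℝ → ℝ)
    (hconc : ∀ A B : Matrix (Fin t) (Fin t) ℝ, A.IsSymm → B.IsSymm →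
      ∀ a b : ℝ, 0 ≤ a → 0 ≤ b → a + b = 1 →
        a * Phi A + b * Phi B ≤ Phi (a • A + b • B)) :
    ConcaveOn ℝ Set.univ (PhiS Phi) := by
  refine ⟨convex_univ, ?_⟩
  intro x _ y _ a b ha hb hab
  have hs : ∀ M : Matrix (Fin t) (Fin t) ℝ, ((1/2 : ℝ) • (M + Mᵀ)).IsSymm := by
    intro M
    simp [Matrix.IsSymm, add_comm]
  have := hconc _ _ (hs (Matrix.of x)) (hs (Matrix.of y)) a b ha hb hab
  refine this.trans (le_of_eq ?_)
  unfold PhiS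
  congr 1
  ext i j
  simp
  ring

/-- for any concave, permutation-invariant, Loewner-monotone criterion
and any exchangeable prior, the symmetrized design is at least as good as `d`. -/
theorem stmt3 (p t n : ℕ) (hp : 2 ≤ p) (ht : 3 ≤ t) (hn : 1 ≤ n)
    (S : Matrix (Fin p) (Fin p) ℝ) (hS : S.PosDef)
    (Phi : Matrix (Fin t) (Fin t) ℝ → ℝ)
    (hconc : ∀ A B : Matrix (Fin t) (Fin t) ℝ, A.IsSymm → B.IsSymm →
      ∀ a b : ℝ, 0 ≤ a → 0 ≤ b → a + b = 1 →
        a * Phi A + b * Phi B ≤ Phi (a • A + b • B))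
    (hinv : ∀ (σ : Equiv.Perm (Fin t)) (C : Matrix (Fin t) (Fin t) ℝ),
      Phi ((Smat σ)ᵀ * C * Smat σ) = Phi C)
    (hmono : ∀ A B : Matrix (Fin t) (Fin t) ℝ, A.IsSymm → B.IsSymm →
      (B - A).PosSemidef → Phi A ≤ Phi B)
    (l0 : ℝ) (g : Measure (Fin t → ℝ)) (hg : IsExchangeablePrior g)
    (w : TrtSeq p t → ℝ) (hw : IsDesign w)
    (hC : ∀ᵐ τ0 ∂g, 0 < τ0 ⬝ᵥ (CD n S w 1 1 *ᵥ τ0))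
    (hint : Integrable (fun τ0 => Phi (CInfo n S w τ0 l0)) g) :
    (∀ᵐ τ0 ∂g, 0 < τ0 ⬝ᵥ (CD n S (symmetrize w) 1 1 *ᵥ τ0)) ∧
    ∫ τ0, Phi (CInfo n S w τ0 l0) ∂g ≤
      ∫ τ0, Phi (CInfo n S (symmetrize w) τ0 l0) ∂g := by
  obtain ⟨hprob, -, hmap⟩ := hg
  have hmeas : ∀ σ : Equiv.Perm (Fin t), Measurable (fun (τ : Fin t → ℝ) i => τ (σ i)) := by
    intro σ; fun_prop
  have hmp : ∀ σ : Equiv.Perm (Fin t),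
      MeasurePreserving (fun (τ : Fin t → ℝ) i => τ (σ i)) g g := fun σ => ⟨hmeas σ, hmap σ⟩
  have hall : ∀ᵐ τ ∂g, ∀ σ : Equiv.Perm (Fin t),
      0 < τ ⬝ᵥ (CD n S (permDesign σ w) 1 1 *ᵥ τ) := by
    rw [ae_all_iff]
    intro σ
    have := (hmp σ).quasiMeasurePreserving.ae hC
    filter_upwards [this] with τ hτ
    rw [dot_perm]; exact hτ
  have hpos : ∀ᵐ τ0 ∂g, 0 < τ0 ⬝ᵥ (CD n S (symmetrize w) 1 1 *ᵥ τ0) := by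
    filter_upwards [hall] with τ hτ
    exact dot_sym_pos hp n S hS w τ hτ
  refine ⟨hpos, ?_⟩
  have hcv := PhiS_concave Phi hconc
  have hcont : Continuous (PhiS Phi) := by
    rw [← continuousOn_univ]; exact hcv.continuousOn isOpen_univ
  -- pointwise inequality
  have hlow : ∀ᵐ τ ∂g, ∑ σ : Equiv.Perm (Fin t), (Nat.factorial t : ℝ)⁻¹ *
      Phi (CInfo n S w (fun i => τ (σ i)) l0) ≤ Phi (CInfo n S (symmetrize w) τ l0) := by
    filter_upwards [hall] with τ hτ
    have h1 := hcv.le_map_sum (t := Finset.univ)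
      (w := fun _ : Equiv.Perm (Fin t) => (Nat.factorial t : ℝ)⁻¹)
      (p := fun σ => CInfo n S (permDesign σ w) τ l0)
      (by intros; positivity) (sum_fact_inv t) (fun _ _ => Set.mem_univ _)
    have hsymm : (∑ σ : Equiv.Perm (Fin t), (Nat.factorial t : ℝ)⁻¹ •
        CInfo n S (permDesign σ w) τ l0).IsSymm := by
      simp only [Matrix.IsSymm, transpose_sum, transpose_smul]
      simp only [(CInfo_isSymm n S hS _ τ l0).eq]
    have h2 := PhiS_eq Phi _ hsymm
    have h3 := hmono _ _ hsymm (CInfo_isSymm n S hS (symmetrize w) τ l0)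
      (CInfo_sym_ge hp n S hS w τ l0 hτ)
    have h4 : ∀ σ : Equiv.Perm (Fin t), PhiS Phi (CInfo n S (permDesign σ w) τ l0) =
        Phi (CInfo n S w (fun i => τ (σ i)) l0) := by
      intro σ
      rw [PhiS_eq Phi _ (CInfo_isSymm n S hS _ τ l0), CInfo_perm, hinv]
    simp only [h4, smul_eq_mul] at h1
    exact (h1.trans (le_of_eq h2)).trans h3
  have hup : ∀ᵐ τ ∂g, Phi (CInfo n S (symmetrize w) τ l0) ≤ Phi (Kmat n S (symmetrize w) l0) := by
    filter_upwards [hpos] with τ hτ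
    exact hmono _ _ (CInfo_isSymm n S hS _ τ l0) (Kmat_isSymm n S hS _ l0)
      (CInfo_le_Kmat n S hS _ τ l0 hτ)
  have hintσ : ∀ σ : Equiv.Perm (Fin t),
      Integrable (fun τ : Fin t → ℝ => Phi (CInfo n S w (fun i => τ (σ i)) l0)) g :=
    fun σ => (hmp σ).integrable_comp_of_integrable hint
  have hlowint : Integrable (fun τ : Fin t → ℝ => ∑ σ : Equiv.Perm (Fin t),
      (Nat.factorial t : ℝ)⁻¹ * Phi (CInfo n S w (fun i => τ (σ i)) l0)) g :=
    integrable_finsetSum _ fun σ _ => (hintσ σ).const_mul _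
  have hm : Measurable (fun τ : Fin t → ℝ => Phi (CInfo n S (symmetrize w) τ l0)) := by
    have e : (fun τ : Fin t → ℝ => Phi (CInfo n S (symmetrize w) τ l0)) =
        fun τ => PhiS Phi (CInfo n S (symmetrize w) τ l0) := by
      funext τ; rw [PhiS_eq Phi _ (CInfo_isSymm n S hS _ τ l0)]
    rw [e]
    refine hcont.measurable.comp ?_
    refine measurable_pi_lambda _ fun i => measurable_pi_lambda _ fun j => ?_
    simp only [CInfo, Matrix.sub_apply, Matrix.smul_apply, mul_apply, vecMulVec_apply, dotProduct, mulVec,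
      Matrix.add_apply, smul_eq_mul]
    fun_prop
  have hsint : Integrable (fun τ : Fin t → ℝ => Phi (CInfo n S (symmetrize w) τ l0)) g :=
    integrable_of_le_of_le hm.aestronglyMeasurable hlow hup hlowint (integrable_const _)
  have hintegral : ∀ σ : Equiv.Perm (Fin t),
      ∫ τ, Phi (CInfo n S w (fun i => τ (σ i)) l0) ∂g = ∫ τ, Phi (CInfo n S w τ l0) ∂g := by
    intro σ
    conv_rhs => rw [← hmap σ]
    rw [integral_map (hmeas σ).aemeasurable]
    rw [hmap σ]; exact hint.aestronglyMeasurable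
  calc ∫ τ0, Phi (CInfo n S w τ0 l0) ∂g
      = ∫ τ, ∑ σ : Equiv.Perm (Fin t), (Nat.factorial t : ℝ)⁻¹ *
          Phi (CInfo n S w (fun i => τ (σ i)) l0) ∂g := by
        rw [integral_finsetSum _ fun σ _ => (hintσ σ).const_mul _]
        simp only [integral_const_mul, hintegral]
        rw [← Finset.sum_mul, sum_fact_inv, one_mul]
    _ ≤ _ := integral_mono_ae hlowint hsint hlow
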